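/- Let ξ ~ N(ν, λ²I_n) be an n-dimensional Gaussian random vector with ν ≠ 0 and λ > 0. Then the projected random vector ξ/‖ξ‖ satisfies MD(ξ/‖ξ‖) = ν/‖ν‖ and MRL(ξ/‖ξ‖) = ϱ_n(‖ν‖/λ). -/

import Mathlib

open MeasureTheory ProbabilityTheory Matrix

noncomputable section

def euclNorm {n : ℕ} (x : Fin n → ℝ) : ℝ := Real.sqrt (∑ i, x i ^ 2)

def centerMat (n : ℕ) : Matrix (Fin n) (Fin n) ℝ :=
  1 - (n : ℝ)⁻¹ • Matrix.of (fun _ _ => (1 : ℝ))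

def chi {n : ℕ} (z : Fin n → ℝ) : Fin n → ℝ :=
  (euclNorm ((centerMat n).mulVec z))⁻¹ • (centerMat n).mulVec z

def meanVec {Ω : Type*} [MeasurableSpace Ω] (P : Measure Ω) {n : ℕ}
    (X : Ω → Fin n → ℝ) : Fin n → ℝ := fun i => ∫ ω, X ω i ∂P

def covMatrix {Ω : Type*} [MeasurableSpace Ω] (P : Measure Ω) {n : ℕ}
    (X : Ω → Fin n → ℝ) : Matrix (Fin n) (Fin n) ℝ :=
  Matrix.of fun i j => ∫ ω, (X ω i - meanVec P X i) * (X ω j - meanVec P X j) ∂P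

def MRL {Ω : Type*} [MeasurableSpace Ω] (P : Measure Ω) {n : ℕ}
    (X : Ω → Fin n → ℝ) : ℝ := euclNorm (meanVec P X)

def MD {Ω : Type*} [MeasurableSpace Ω] (P : Measure Ω) {n : ℕ}
    (X : Ω → Fin n → ℝ) : Fin n → ℝ := (euclNorm (meanVec P X))⁻¹ • meanVec P X

def stdGaussianPi (n : ℕ) : Measure (Fin n → ℝ) :=
  Measure.pi fun _ => gaussianReal 0 1

def IsGaussianVec {Ω : Type*} [MeasurableSpace Ω] (P : Measure Ω) {n : ℕ}
    (Z : Ω → Fin n → ℝ) (m : Fin n → ℝ) (S : Matrix (Fin n) (Fin n) ℝ) : Prop :=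
  ∃ A : Matrix (Fin n) (Fin n) ℝ, A * Aᵀ = S ∧
    Measure.map Z P = Measure.map (fun x => m + A.mulVec x) (stdGaussianPi n)

def ascFact (a : ℝ) (k : ℕ) : ℝ := ∏ i ∈ Finset.range k, (a + i)

def kummerM (a b z : ℝ) : ℝ := ∑' k : ℕ, (ascFact a k / ascFact b k) * z ^ k / (Nat.factorial k)

def varrho (m : ℕ) (x : ℝ) : ℝ :=
  (Real.Gamma (((m : ℝ) + 1) / 2) / (Real.sqrt 2 * Real.Gamma (((m : ℝ) + 2) / 2))) * x *
    kummerM (1 / 2) (((m : ℝ) + 2) / 2) (-x ^ 2 / 2)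

def fFun (m : ℕ) (x : ℝ) : ℝ :=
  1 - (((m : ℝ) - 1) / m) * kummerM 1 ((m : ℝ) / 2 + 1) (-x ^ 2 / 2) - (varrho m x) ^ 2

def gFun (m : ℕ) (x : ℝ) : ℝ :=
  (1 / (m : ℝ)) * kummerM 1 ((m : ℝ) / 2 + 1) (-x ^ 2 / 2)

def Vmat (n : ℕ) : Matrix (Fin n) (Fin n) ℝ :=
  Matrix.of fun i j =>
    if (j : ℕ) = n - 1 then 1 / Real.sqrt n
    else if (i : ℕ) = (j : ℕ) then
      ((n : ℝ) - 1 - (j : ℕ)) / Real.sqrt (((n : ℝ) - 1 - (j : ℕ)) * ((n : ℝ) - (j : ℕ)))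
    else if (j : ℕ) < (i : ℕ) then
      -(1 / Real.sqrt (((n : ℝ) - 1 - (j : ℕ)) * ((n : ℝ) - (j : ℕ))))
    else 0

def projMat (n : ℕ) : Matrix (Fin n) (Fin n) ℝ :=
  Matrix.diagonal fun i => if (i : ℕ) < n - 1 then 1 else 0

def embedZero {n : ℕ} (v : Fin (n - 1) → ℝ) : Fin n → ℝ :=
  fun i => if h : (i : ℕ) < n - 1 then v ⟨i, h⟩ else 0

def Ximat (n : ℕ) (r : ℝ) : Matrix (Fin n) (Fin n) ℝ :=
  Matrix.of fun i j => if i = j then 1 else r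

def stdNormCDF (x : ℝ) : ℝ := (gaussianReal 0 1 (Set.Iic x)).toReal

def thetaTilde : Fin 2 → ℝ := ![Real.sqrt 2 / 2, -(Real.sqrt 2 / 2)]

open Set in
lemma beta_int {a b : ℝ} (ha : 0 < a) (hb : 0 < b) :
    IntegrableOn (fun u : ℝ => u ^ (a - 1) * (1 - u) ^ (b - 1)) (Ioo 0 1) ∧
    ∫ u in Ioo (0:ℝ) 1, u ^ (a - 1) * (1 - u) ^ (b - 1) = ProbabilityTheory.beta a b := by
  have hc := Complex.betaIntegral_convergent (u := (a:ℂ)) (v := (b:ℂ)) (by simpa) (by simpa)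
  rw [intervalIntegrable_iff_integrableOn_Ioo_of_le zero_le_one] at hc
  have he : EqOn (fun x : ℝ => (x : ℂ) ^ ((a:ℂ) - 1) * (1 - (x:ℂ)) ^ ((b:ℂ) - 1))
      (fun u : ℝ => ((u ^ (a - 1) * (1 - u) ^ (b - 1) : ℝ) : ℂ)) (Ioo 0 1) := by
    intro x hx
    have h1 : (0:ℝ) ≤ x := hx.1.le
    have h2 : (0:ℝ) ≤ 1 - x := by linarith [hx.2]
    simp only [Complex.ofReal_mul, Complex.ofReal_cpow h1, Complex.ofReal_cpow h2]
    push_cast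
    rfl
  have hi := hc.congr_fun he measurableSet_Ioo
  refine ⟨?_, ?_⟩
  · have := hi.re
    simpa [IntegrableOn] using this
  · rw [beta_eq_betaIntegralReal a b ha hb, Complex.betaIntegral,
      intervalIntegral.integral_of_le zero_le_one, integral_Ioc_eq_integral_Ioo,
      setIntegral_congr_fun measurableSet_Ioo he]
    rw [integral_complex_ofReal, Complex.ofReal_re]

lemma ascFact_pos {a : ℝ} (ha : 0 < a) (k : ℕ) : 0 < ascFact a k :=
  Finset.prod_pos fun i _ => by positivity

lemma Gamma_add_nat {a : ℝ} (ha : 0 < a) (k : ℕ) :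
    Real.Gamma (a + k) = ascFact a k * Real.Gamma a := by
  induction k with
  | zero => simp [ascFact]
  | succ k ih =>
    have : ascFact a (k+1) = ascFact a k * (a + k) := by simp [ascFact, Finset.prod_range_succ]
    rw [this, Nat.cast_succ, ← add_assoc, Real.Gamma_add_one (by positivity), ih]; ring

lemma beta_add_nat {a b : ℝ} (ha : 0 < a) (hb : 0 < b) (k : ℕ) :
    ProbabilityTheory.beta (a + k) b =
      ascFact a k / ascFact (a + b) k * ProbabilityTheory.beta a b := by
  unfold ProbabilityTheory.beta
  rw [show a + k + b = a + b + k by ring, Gamma_add_nat ha, Gamma_add_nat (add_pos ha hb)]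
  have := (ascFact_pos (add_pos ha hb) k).ne'
  have := (Real.Gamma_pos_of_pos (add_pos ha hb)).ne'
  field_simp

open Set in
lemma kummer_int {a b : ℝ} (ha : 0 < a) (hb : 0 < b) (z : ℝ) :
    ∫ u in Ioo (0:ℝ) 1, u ^ (a - 1) * (1 - u) ^ (b - 1) * Real.exp (z * u) =
      ProbabilityTheory.beta a b * kummerM a (a + b) z := by
  have key : ∀ (k : ℕ) (y : ℝ), EqOn
      (fun u : ℝ => u ^ (a - 1) * (1 - u) ^ (b - 1) * ((y * u) ^ k / (Nat.factorial k)))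
      (fun u => (y ^ k / (Nat.factorial k)) * (u ^ (a + k - 1) * (1 - u) ^ (b - 1))) (Ioo 0 1) := by
    intro k y u hu
    have : u ^ (a + k - 1) = u ^ (a - 1) * u ^ k := by
      rw [show a + k - 1 = a - 1 + k by ring, Real.rpow_add hu.1, Real.rpow_natCast]
    simp only [this, mul_pow]
    ring
  have hak : ∀ k : ℕ, 0 < a + k := fun k => by positivity
  have hint : ∀ (k : ℕ) (y : ℝ), IntegrableOn
      (fun u : ℝ => u ^ (a - 1) * (1 - u) ^ (b - 1) * ((y * u) ^ k / (Nat.factorial k)))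
      (Ioo 0 1) := fun k y =>
    IntegrableOn.congr_fun ((beta_int (hak k) hb).1.const_mul (y ^ k / (Nat.factorial k)))
      (key k y).symm measurableSet_Ioo
  have hval : ∀ (k : ℕ) (y : ℝ), ∫ u in Ioo (0:ℝ) 1,
      u ^ (a - 1) * (1 - u) ^ (b - 1) * ((y * u) ^ k / (Nat.factorial k)) =
      ProbabilityTheory.beta a b *
        (ascFact a k / ascFact (a + b) k * y ^ k / (Nat.factorial k)) := by
    intro k y
    rw [setIntegral_congr_fun measurableSet_Ioo (key k y), integral_const_mul,
      (beta_int (hak k) hb).2, beta_add_nat ha hb]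
    ring
  have hnorm : ∀ k : ℕ, ∫ u in Ioo (0:ℝ) 1,
      ‖u ^ (a - 1) * (1 - u) ^ (b - 1) * ((z * u) ^ k / (Nat.factorial k))‖ =
      ∫ u in Ioo (0:ℝ) 1, u ^ (a - 1) * (1 - u) ^ (b - 1) * ((|z| * u) ^ k / (Nat.factorial k)) := by
    intro k
    refine setIntegral_congr_fun measurableSet_Ioo fun u hu => ?_
    have h1 : (0:ℝ) < u := hu.1
    have h2 : (0:ℝ) < 1 - u := by linarith [hu.2]
    simp only [norm_mul, norm_div, norm_pow, Real.norm_eq_abs, abs_of_pos h1,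
      abs_of_pos (Real.rpow_pos_of_pos h1 _), abs_of_pos (Real.rpow_pos_of_pos h2 _), Nat.abs_cast]
  have hs := hasSum_integral_of_summable_integral_norm (μ := volume.restrict (Ioo (0:ℝ) 1))
    (F := fun (k : ℕ) (u : ℝ) =>
      u ^ (a - 1) * (1 - u) ^ (b - 1) * ((z * u) ^ k / (Nat.factorial k)))
    (fun k => hint k z) (by
      simp_rw [hnorm, hval]
      refine Summable.mul_left _ ?_
      refine Summable.of_nonneg_of_le (fun k => ?_) (fun k => ?_)
        (Real.summable_pow_div_factorial |z|)
      · have := ascFact_pos ha k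
        have := ascFact_pos (add_pos ha hb) k
        positivity
      · gcongr
        have h1 : ascFact a k / ascFact (a + b) k ≤ 1 := by
          rw [div_le_one (ascFact_pos (add_pos ha hb) k)]
          refine Finset.prod_le_prod (fun i _ => by positivity) (fun i _ => by linarith)
        have : 0 ≤ |z| ^ k := by positivity
        nlinarith)
  simp_rw [hval] at hs
  have h2 : ∀ u : ℝ, ∑' k : ℕ, u ^ (a - 1) * (1 - u) ^ (b - 1) * ((z * u) ^ k / (Nat.factorial k))
      = u ^ (a - 1) * (1 - u) ^ (b - 1) * Real.exp (z * u) := by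
    intro u
    rw [tsum_mul_left, Real.exp_eq_exp_ℝ, NormedSpace.exp_eq_tsum_div]
  simp_rw [h2] at hs
  rw [← hs.tsum_eq, tsum_mul_left, kummerM]

open Set in
lemma kummer_pos {a b : ℝ} (ha : 0 < a) (hb : 0 < b) (z : ℝ) :
    0 < kummerM a (a + b) z := by
  have hB := beta_pos ha hb
  have h := kummer_int ha hb z
  refine pos_of_mul_pos_right (a := ProbabilityTheory.beta a b) ?_ hB.le
  rw [← h]
  have hi := (beta_int ha hb).1
  have : Real.exp (-|z|) * ProbabilityTheory.beta a b ≤ ∫ u in Ioo (0:ℝ) 1, u ^ (a - 1) * (1 - u) ^ (b - 1) * Real.exp (z * u) := by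
    rw [← (beta_int ha hb).2, ← integral_const_mul]
    refine setIntegral_mono_on (hi.const_mul _) ?_ measurableSet_Ioo ?_
    · refine Integrable.mul_bdd (c := Real.exp |z|) hi (by fun_prop) ?_
      filter_upwards [ae_restrict_mem measurableSet_Ioo] with u hu
      rw [Real.norm_eq_abs, Real.abs_exp, Real.exp_le_exp]
      nlinarith [hu.1, hu.2, le_abs_self z, abs_nonneg z, neg_abs_le z]
    · intro u hu
      rw [mul_comm]
      have h1 : (0:ℝ) < u := hu.1
      have h2 : (0:ℝ) < 1 - u := by linarith [hu.2]
      have := Real.rpow_pos_of_pos h1 (a-1)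
      have := Real.rpow_pos_of_pos h2 (b-1)
      gcongr
      nlinarith [hu.1, hu.2, le_abs_self z, abs_nonneg z, neg_abs_le z]
  exact lt_of_lt_of_le (by positivity) this

open Set in
lemma subst_int (n : ℕ) (x : ℝ) :
    ∫ s in Ioi (0:ℝ), (1 + 2 * s ^ 2)⁻¹ * (√(1 + 2 * s ^ 2))⁻¹ ^ n *
      Real.exp (-(s ^ 2 * x ^ 2 / (1 + 2 * s ^ 2))) =
    √2 / 4 * ∫ u in Ioo (0:ℝ) 1, u ^ ((1/2 : ℝ) - 1) * (1 - u) ^ (((n:ℝ) + 1) / 2 - 1) *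
      Real.exp (-x ^ 2 / 2 * u) := by
  have himg : (fun s : ℝ => 1 - (1 + 2 * s ^ 2)⁻¹) '' Ioi 0 = Ioo 0 1 := by
    ext u
    constructor
    · rintro ⟨s, hs, rfl⟩
      have hs : 0 < s := hs
      have : 1 < 1 + 2 * s ^ 2 := by nlinarith
      have h1 : (1 + 2 * s ^ 2)⁻¹ < 1 := inv_lt_one_of_one_lt₀ this
      have h2 : 0 < (1 + 2 * s ^ 2)⁻¹ := by positivity
      constructor <;> simp only <;> linarith
    · rintro ⟨h0, h1⟩
      have h2 : 0 < 1 - u := by linarith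
      refine ⟨√(u / (2 * (1 - u))), Real.sqrt_pos.2 (by positivity), ?_⟩
      simp only
      rw [Real.sq_sqrt (by positivity)]
      field_simp
      ring
  have hinj : InjOn (fun s : ℝ => 1 - (1 + 2 * s ^ 2)⁻¹) (Ioi 0) := by
    intro s hs t ht h
    have hs : 0 < s := hs
    have ht : 0 < t := ht
    simp only [sub_right_inj, _root_.inv_inj, add_right_inj] at h
    have : s ^ 2 = t ^ 2 := by linarith
    exact (pow_left_inj₀ hs.le ht.le two_ne_zero).1 this
  rw [← himg, integral_image_eq_integral_abs_deriv_smul (f' := fun s => 4 * s / (1 + 2 * s ^ 2) ^ 2)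
    measurableSet_Ioi _ hinj, ← integral_const_mul]
  · refine setIntegral_congr_fun measurableSet_Ioi fun s hs => ?_
    have hs : 0 < s := hs
    have hp : 0 < 1 + 2 * s ^ 2 := by positivity
    set p := 1 + 2 * s ^ 2 with hpdef
    have e1 : 1 - p⁻¹ = (√2 * s) ^ 2 * (√p)⁻¹ ^ 2 := by
      rw [mul_pow, inv_pow, Real.sq_sqrt hp.le, Real.sq_sqrt (by norm_num)]
      field_simp
      rw [hpdef]; ring
    have hsp : 0 < √p := Real.sqrt_pos.2 hp
    have e2 : (1 - p⁻¹) ^ ((1/2:ℝ) - 1) = (√2 * s)⁻¹ * √p := by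
      rw [e1, ← mul_pow, ← Real.rpow_natCast, ← Real.rpow_mul (by positivity)]
      norm_num
      rw [Real.rpow_neg_one]
      field_simp
    have e3 : (1 - (1 - p⁻¹)) ^ (((n:ℝ) + 1) / 2 - 1) = (√p)⁻¹ ^ n * √p := by
      have : 1 - (1 - p⁻¹) = ((√p)⁻¹) ^ (2:ℕ) := by
        rw [inv_pow, Real.sq_sqrt hp.le]; ring
      rw [this, ← Real.rpow_natCast _ 2, ← Real.rpow_mul (by positivity),
        show ((2:ℕ):ℝ) * (((n:ℝ) + 1) / 2 - 1) = n - 1 by push_cast; ring,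
        Real.rpow_sub_one (by positivity), Real.rpow_natCast, div_inv_eq_mul]
    have e4 : -x ^ 2 / 2 * (1 - p⁻¹) = -(s ^ 2 * x ^ 2 / p) := by
      field_simp
      rw [hpdef]; ring
    simp only [smul_eq_mul]
    rw [e2, e3, e4, abs_of_pos (by positivity)]
    have : √p * √p = p := Real.mul_self_sqrt hp.le
    have h2 : √2 * √2 = 2 := Real.mul_self_sqrt (by norm_num)
    have : √2 / 4 * (4 * s / p ^ 2 * ((√2 * s)⁻¹ * √p * ((√p)⁻¹ ^ n * √p) * Real.exp (-(s ^ 2 * x ^ 2 / p))))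
      = (√p * √p) / p ^ 2 * (√p)⁻¹ ^ n * Real.exp (-(s ^ 2 * x ^ 2 / p)) := by
      field_simp
    rw [this, Real.mul_self_sqrt hp.le]
    field_simp
  · intro s hs
    have hp : (1 + 2 * s ^ 2) ≠ 0 := by positivity
    have : HasDerivAt (fun s : ℝ => 1 + 2 * s ^ 2) (4 * s) s := by
      have := ((hasDerivAt_pow 2 s).const_mul 2).const_add 1
      refine this.congr_deriv ?_
      norm_num; ring
    have := (this.inv hp).const_sub 1
    refine (this.congr_deriv ?_).hasDerivWithinAt
    ring

lemma gauss_zero (s m : ℝ) : ∫ g, Real.exp (-(s ^ 2 * (m + g) ^ 2)) ∂(gaussianReal 0 1) =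
    (√(1 + 2 * s ^ 2))⁻¹ * Real.exp (-(s ^ 2 * m ^ 2 / (1 + 2 * s ^ 2))) ∧
    ∫ g, (m + g) * Real.exp (-(s ^ 2 * (m + g) ^ 2)) ∂(gaussianReal 0 1) =
    m * (1 + 2 * s ^ 2)⁻¹ *
      ((√(1 + 2 * s ^ 2))⁻¹ * Real.exp (-(s ^ 2 * m ^ 2 / (1 + 2 * s ^ 2)))) := by
  have hp : 0 < 1 + 2 * s ^ 2 := by positivity
  set p := 1 + 2 * s ^ 2 with hpdef
  set E := Real.exp (-(s ^ 2 * m ^ 2 / p)) with hE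
  have hc : ∀ g : ℝ, gaussianPDFReal 0 1 g * Real.exp (-(s ^ 2 * (m + g) ^ 2)) =
      (√(2 * Real.pi))⁻¹ * E * Real.exp (-(p / 2) * (g + 2 * s ^ 2 * m / p) ^ 2) := by
    intro g
    simp only [gaussianPDFReal, NNReal.coe_one, mul_one, sub_zero]
    rw [mul_assoc, mul_assoc, hE, ← Real.exp_add, ← Real.exp_add]
    congr 2
    field_simp
    rw [hpdef]; ring
  have hb : 0 < p / 2 := by positivity
  have hconst : (√(2 * Real.pi))⁻¹ * √(Real.pi / (p / 2)) = (√p)⁻¹ := by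
    rw [← Real.sqrt_inv, ← Real.sqrt_mul (by positivity), ← Real.sqrt_inv]
    congr 1
    have := Real.pi_pos
    field_simp
  constructor
  · rw [integral_gaussianReal_eq_integral_smul one_ne_zero]
    simp only [smul_eq_mul, hc]
    rw [integral_const_mul, integral_add_right_eq_self (fun g : ℝ => Real.exp (-(p / 2) * g ^ 2)),
      integral_gaussian, ← hconst]
    ring
  · rw [integral_gaussianReal_eq_integral_smul one_ne_zero]
    have hc' : ∀ g : ℝ, gaussianPDFReal 0 1 g * ((m + g) * Real.exp (-(s ^ 2 * (m + g) ^ 2))) =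
      (√(2 * Real.pi))⁻¹ * E * (((g + 2 * s ^ 2 * m / p) + m * p⁻¹) *
        Real.exp (-(p / 2) * (g + 2 * s ^ 2 * m / p) ^ 2)) := by
      intro g
      rw [mul_left_comm, hc]
      have : m + g = (g + 2 * s ^ 2 * m / p) + m * p⁻¹ := by
        field_simp
        rw [hpdef]; ring
      rw [this]; ring
    simp only [smul_eq_mul, hc']
    rw [integral_const_mul, integral_add_right_eq_self
      (fun g : ℝ => (g + m * p⁻¹) * Real.exp (-(p / 2) * g ^ 2))]
    simp_rw [add_mul]
    rw [integral_add (integrable_mul_exp_neg_mul_sq hb)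
      ((integrable_exp_neg_mul_sq hb).const_mul _), integral_const_mul, integral_gaussian, ← hconst]
    have hodd : ∫ g : ℝ, g * Real.exp (-(p / 2) * g ^ 2) = 0 := by
      have h := integral_neg_eq_self (fun g : ℝ => g * Real.exp (-(p / 2) * g ^ 2)) volume
      simp only [neg_sq, neg_mul, integral_neg] at h ⊢
      linarith
    rw [hodd]
    ring

lemma pi_int {n : ℕ} (μ : Fin n → ℝ) (i : Fin n) (s : ℝ) :
    ∫ g, (μ i + g i) * Real.exp (-(∑ j, (μ j + g j) ^ 2) * s ^ 2) ∂(stdGaussianPi n) =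
    μ i * ((1 + 2 * s ^ 2)⁻¹ * (√(1 + 2 * s ^ 2))⁻¹ ^ n *
      Real.exp (-(s ^ 2 * (euclNorm μ) ^ 2 / (1 + 2 * s ^ 2)))) := by
  have h1 : ∀ g : Fin n → ℝ, (μ i + g i) * Real.exp (-(∑ j, (μ j + g j) ^ 2) * s ^ 2) =
      ∏ j, (if j = i then μ j + g j else 1) * Real.exp (-(s ^ 2 * (μ j + g j) ^ 2)) := by
    intro g
    rw [Finset.prod_mul_distrib, Finset.prod_ite_eq' Finset.univ i, ← Real.exp_sum]
    simp [Finset.mul_sum, mul_comm]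
  simp_rw [h1]
  rw [stdGaussianPi, integral_fintype_prod_eq_prod (𝕜 := ℝ)
    (fun j x => (if j = i then μ j + x else 1) * Real.exp (-(s ^ 2 * (μ j + x) ^ 2)))]
  have h2 : ∀ j, ∫ x, (if j = i then μ j + x else 1) * Real.exp (-(s ^ 2 * (μ j + x) ^ 2))
      ∂(gaussianReal 0 1) = (if j = i then μ j * (1 + 2 * s ^ 2)⁻¹ else 1) *
      ((√(1 + 2 * s ^ 2))⁻¹ * Real.exp (-(s ^ 2 * μ j ^ 2 / (1 + 2 * s ^ 2)))) := by
    intro j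
    split_ifs
    · exact (gauss_zero s (μ j)).2
    · simpa using (gauss_zero s (μ j)).1
  simp_rw [h2]
  rw [Finset.prod_mul_distrib, Finset.prod_ite_eq' Finset.univ i, Finset.prod_mul_distrib,
    ← Real.exp_sum, euclNorm, Real.sq_sqrt (Finset.sum_nonneg fun _ _ => sq_nonneg _)]
  simp only [Finset.mem_univ, if_true, Finset.prod_const, Finset.card_univ, Fintype.card_fin,
    Finset.mul_sum, Finset.sum_div, Finset.sum_neg_distrib]
  ring

lemma euclNorm_sq {n : ℕ} (x : Fin n → ℝ) : euclNorm x ^ 2 = ∑ j, x j ^ 2 :=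
  Real.sq_sqrt (Finset.sum_nonneg fun _ _ => sq_nonneg _)

lemma abs_le_euclNorm {n : ℕ} (x : Fin n → ℝ) (i : Fin n) : |x i| ≤ euclNorm x := by
  refine Real.abs_le_sqrt ?_
  exact Finset.single_le_sum (f := fun j => x j ^ 2) (fun _ _ => sq_nonneg _) (Finset.mem_univ i)

lemma euclNorm_nonneg {n : ℕ} (x : Fin n → ℝ) : 0 ≤ euclNorm x := Real.sqrt_nonneg _

lemma euclNorm_measurable {n : ℕ} : Measurable (euclNorm (n := n)) := by
  unfold euclNorm; fun_prop

instance {n : ℕ} : IsProbabilityMeasure (stdGaussianPi n) := by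
  unfold stdGaussianPi; infer_instance

lemma unit_bdd {n : ℕ} (x : Fin n → ℝ) (i : Fin n) : |(euclNorm x)⁻¹ * x i| ≤ 1 := by
  rw [abs_mul, abs_inv, abs_of_nonneg (euclNorm_nonneg x), inv_mul_eq_div]
  exact div_le_one_of_le₀ (abs_le_euclNorm x i) (euclNorm_nonneg x)

open Set in
lemma inner_int {n : ℕ} (x : Fin n → ℝ) (c : ℝ) (i : Fin n) (hc : |c| = |x i|):
    IntegrableOn (fun s : ℝ => c * Real.exp (-(∑ j, x j ^ 2) * s ^ 2)) (Ioi 0) ∧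
    ∫ s in Ioi (0:ℝ), c * Real.exp (-(∑ j, x j ^ 2) * s ^ 2) =
      √Real.pi / 2 * ((euclNorm x)⁻¹ * c) := by
  constructor
  · rcases eq_or_ne c 0 with h | h
    · simp [h]
    · have : x i ≠ 0 := by
        intro h0; rw [h0] at hc; simp at hc; exact h hc
      have : 0 < ∑ j, x j ^ 2 := by
        refine lt_of_lt_of_le (by positivity : 0 < x i ^ 2) ?_
        exact Finset.single_le_sum (f := fun j => x j ^ 2) (fun _ _ => sq_nonneg _)
          (Finset.mem_univ i)
      exact ((integrable_exp_neg_mul_sq this).const_mul c).integrableOn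
  · rw [integral_const_mul, integral_gaussian_Ioi, Real.sqrt_div Real.pi_pos.le, euclNorm]
    ring

open Set in
lemma std_mean {n : ℕ} (μ : Fin n → ℝ) (i : Fin n) :
    ∫ g, (euclNorm (μ + g))⁻¹ * (μ i + g i) ∂(stdGaussianPi n) =
    μ i * (2 / √Real.pi * ∫ s in Ioi (0:ℝ), (1 + 2 * s ^ 2)⁻¹ * (√(1 + 2 * s ^ 2))⁻¹ ^ n *
      Real.exp (-(s ^ 2 * (euclNorm μ) ^ 2 / (1 + 2 * s ^ 2)))) := by
  have hpi : √Real.pi ≠ 0 := (Real.sqrt_pos.2 Real.pi_pos).ne'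
  have h1 : ∀ g : Fin n → ℝ, (euclNorm (μ + g))⁻¹ * (μ i + g i) = 2 / √Real.pi *
      ∫ s in Ioi (0:ℝ), (μ i + g i) * Real.exp (-(∑ j, (μ j + g j) ^ 2) * s ^ 2) := by
    intro g
    have h := (inner_int (μ + g) (μ i + g i) i rfl).2
    simp only [Pi.add_apply] at h
    rw [h]
    field_simp
  simp_rw [h1]
  rw [integral_const_mul, integral_integral_swap]
  · simp_rw [pi_int]
    rw [integral_const_mul]
    ring
  · rw [integrable_prod_iff]
    · refine ⟨ae_of_all _ fun g => (inner_int (μ + g) (μ i + g i) i rfl).1, ?_⟩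
      simp only [Function.uncurry, norm_mul, Real.norm_eq_abs, Real.abs_exp]
      have : ∀ g : Fin n → ℝ, ∫ s in Ioi (0:ℝ), |μ i + g i| * Real.exp (-(∑ j, (μ j + g j) ^ 2) * s ^ 2)
        = √Real.pi / 2 * ((euclNorm (μ + g))⁻¹ * |μ i + g i|) := fun g =>
        (inner_int (μ + g) (|μ i + g i|) i (abs_abs _)).2
      simp_rw [this]
      refine Integrable.const_mul ?_ _
      refine Integrable.of_bound (C := 1) ?_ (ae_of_all _ fun g => ?_)
      · refine Measurable.aestronglyMeasurable ?_
        refine Measurable.mul ?_ (by fun_prop)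
        exact (euclNorm_measurable.comp (by fun_prop)).inv
      · have := unit_bdd (μ + g) i
        rw [abs_mul] at this
        rw [Real.norm_eq_abs, abs_mul, abs_abs]
        exact this
    · refine Measurable.aestronglyMeasurable ?_
      simp only [Function.uncurry_def]
      fun_prop

lemma std_mean' {n : ℕ} (μ : Fin n → ℝ) (i : Fin n) :
    ∫ g, (euclNorm (μ + g))⁻¹ * (μ i + g i) ∂(stdGaussianPi n) =
    μ i * (Real.Gamma (((n : ℝ) + 1) / 2) / (Real.sqrt 2 * Real.Gamma (((n : ℝ) + 2) / 2)) *
      kummerM (1 / 2) (((n : ℝ) + 2) / 2) (-(euclNorm μ) ^ 2 / 2)) := by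
  rw [std_mean, subst_int, kummer_int (by norm_num) (by positivity), ProbabilityTheory.beta,
    Real.Gamma_one_half_eq, show (1/2:ℝ) + ((n:ℝ) + 1) / 2 = ((n:ℝ) + 2) / 2 by ring]
  have hpi : √Real.pi ≠ 0 := (Real.sqrt_pos.2 Real.pi_pos).ne'
  have hG : Real.Gamma (((n:ℝ) + 2) / 2) ≠ 0 := (Real.Gamma_pos_of_pos (by positivity)).ne'
  have h2 : √2 ^ 2 = 2 := Real.sq_sqrt (by norm_num)
  field_simp
  rw [h2]
  ring

lemma euclNorm_smul {n : ℕ} (c : ℝ) (x : Fin n → ℝ) : euclNorm (c • x) = |c| * euclNorm x := by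
  rw [euclNorm, euclNorm, ← Real.sqrt_sq_eq_abs, ← Real.sqrt_mul (sq_nonneg c), Finset.mul_sum]
  simp [mul_pow]

/-- Presnell et al.: MD and MRL of the projected normal `ξ/‖ξ‖`. -/
theorem stmt9 {Ω : Type*} [MeasurableSpace Ω] (P : Measure Ω) [IsProbabilityMeasure P]
    {n : ℕ} (ν : Fin n → ℝ) (lam : ℝ) (hν : ν ≠ 0) (hlam : 0 < lam)
    (ξ : Ω → Fin n → ℝ)
    (hgauss : IsGaussianVec P ξ ν (lam ^ 2 • (1 : Matrix (Fin n) (Fin n) ℝ))) :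
    MD P (fun ω => (euclNorm (ξ ω))⁻¹ • ξ ω) = (euclNorm ν)⁻¹ • ν ∧
    MRL P (fun ω => (euclNorm (ξ ω))⁻¹ • ξ ω) = varrho n (euclNorm ν / lam) := by
  obtain ⟨A, hA, hmap⟩ := hgauss
  have hl : lam ≠ 0 := hlam.ne'
  have hA' : Aᵀ * A = lam ^ 2 • (1 : Matrix (Fin n) (Fin n) ℝ) := by
    have h1 : A * ((lam ^ 2)⁻¹ • Aᵀ) = 1 := by
      rw [Matrix.mul_smul, hA, smul_smul, inv_mul_cancel₀ (by positivity), one_smul]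
    have h2 := mul_eq_one_comm.1 h1
    rw [Matrix.smul_mul] at h2
    rw [← h2, smul_smul, mul_inv_cancel₀ (by positivity), one_smul]
  have hnorm : ∀ x : Fin n → ℝ, euclNorm (A.mulVec x) = lam * euclNorm x := by
    intro x
    have : ∑ j, (A.mulVec x) j ^ 2 = lam ^ 2 * ∑ j, x j ^ 2 := by
      have e : A.mulVec x ⬝ᵥ A.mulVec x = lam ^ 2 * (x ⬝ᵥ x) := by
        rw [Matrix.dotProduct_mulVec, Matrix.vecMul_mulVec, hA']
        simp [Matrix.vecMul_smul]
      simpa [dotProduct, sq] using e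
    rw [euclNorm, this, Real.sqrt_mul (sq_nonneg _), Real.sqrt_sq hlam.le, euclNorm]
  set μ : Fin n → ℝ := (lam ^ 2)⁻¹ • Aᵀ.mulVec ν with hμ
  have hAμ : A.mulVec μ = ν := by
    rw [hμ, Matrix.mulVec_smul, Matrix.mulVec_mulVec, hA, Matrix.smul_mulVec, Matrix.one_mulVec,
      smul_smul, inv_mul_cancel₀ (by positivity), one_smul]
  have hμn : euclNorm μ = euclNorm ν / lam := by
    rw [← hAμ, hnorm]; field_simp
  have hνpos : 0 < euclNorm ν := by
    obtain ⟨i, hi⟩ := Function.ne_iff.1 hν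
    exact lt_of_lt_of_le (abs_pos.2 hi) (abs_le_euclNorm ν i)
  set K : ℝ := Real.Gamma (((n : ℝ) + 1) / 2) / (Real.sqrt 2 * Real.Gamma (((n : ℝ) + 2) / 2)) *
      kummerM (1 / 2) (((n : ℝ) + 2) / 2) (-(euclNorm μ) ^ 2 / 2) with hK
  have hKpos : 0 < K := by
    have h1 : 0 < Real.Gamma (((n : ℝ) + 1) / 2) := Real.Gamma_pos_of_pos (by positivity)
    have h2 : 0 < Real.Gamma (((n : ℝ) + 2) / 2) := Real.Gamma_pos_of_pos (by positivity)
    have h3 := kummer_pos (a := 1/2) (b := ((n:ℝ) + 1) / 2) (by norm_num) (by positivity)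
      (-(euclNorm μ) ^ 2 / 2)
    rw [show (1/2:ℝ) + ((n:ℝ) + 1) / 2 = ((n:ℝ) + 2) / 2 by ring] at h3
    positivity
  have hξ : AEMeasurable ξ P := by
    refine AEMeasurable.of_map_ne_zero ?_
    rw [hmap]
    have hm : Measurable (fun x => ν + A.mulVec x) := by
      refine Continuous.measurable ?_
      fun_prop
    have := Measure.isProbabilityMeasure_map (μ := stdGaussianPi n) hm.aemeasurable
    exact IsProbabilityMeasure.ne_zero _
  have hmean : meanVec P (fun ω => (euclNorm (ξ ω))⁻¹ • ξ ω) = (K / lam) • ν := by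
    funext i
    have hmeas : Measurable (fun x : Fin n → ℝ => (euclNorm x)⁻¹ * x i) :=
      euclNorm_measurable.inv.mul (by fun_prop)
    have hm : Measurable (fun x => ν + A.mulVec x) := by
      refine Continuous.measurable ?_
      fun_prop
    have e1 : meanVec P (fun ω => (euclNorm (ξ ω))⁻¹ • ξ ω) i =
        ∫ x, (euclNorm x)⁻¹ * x i ∂(Measure.map ξ P) := by
      rw [integral_map hξ hmeas.aestronglyMeasurable]
      simp [meanVec]
    rw [e1, hmap, integral_map hm.aemeasurable hmeas.aestronglyMeasurable]
    have e2 : ∀ g : Fin n → ℝ, (euclNorm (ν + A.mulVec g))⁻¹ * (ν + A.mulVec g) i =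
        ∑ j, (lam⁻¹ * A i j) * ((euclNorm (μ + g))⁻¹ * (μ j + g j)) := by
      intro g
      rw [← hAμ, ← Matrix.mulVec_add, hnorm]
      simp only [Matrix.mulVec, dotProduct, Finset.mul_sum, Pi.add_apply]
      refine Finset.sum_congr rfl fun j _ => ?_
      rw [mul_inv]; ring
    simp_rw [e2]
    rw [integral_finsetSum]
    · simp_rw [integral_const_mul, std_mean']
      rw [← hK]
      conv_rhs => rw [← hAμ]
      simp only [Matrix.mulVec, dotProduct, Finset.mul_sum, Pi.smul_apply, smul_eq_mul]
      refine Finset.sum_congr rfl fun j _ => ?_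
      ring
    · intro j _
      refine Integrable.const_mul ?_ _
      refine Integrable.of_bound (C := 1) ?_ (ae_of_all _ fun g => ?_)
      · refine Measurable.aestronglyMeasurable ?_
        refine Measurable.mul ?_ (by fun_prop)
        exact (euclNorm_measurable.comp (by fun_prop)).inv
      · exact unit_bdd (μ + g) j
  have hc : 0 < K / lam := by positivity
  constructor
  · rw [MD, hmean, euclNorm_smul, abs_of_pos hc, smul_smul]
    congr 1
    field_simp
  · rw [MRL, hmean, euclNorm_smul, abs_of_pos hc, varrho, ← hμn, hK, hμn]
    ring
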